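/- For every NPLTS (S, A, →) and all states s1, s2 ∈ S, the following chain of inclusions holds among the equivalences that consider a single decorated trace at a time: s1 ≈_{PFTr} s2 implies s1 ≈_{PF} s2, which implies s1 ≈_{PCTr} s2, which implies s1 ≈_{PTr} s2. -/

import Mathlib

open scoped ENNReal
open Classical

noncomputable section

/-- Infimum of a set of values in `ℝ≥0∞`, taken to be `0` when the set is empty
(matching the paper's convention for `⊓` over an empty set). -/
def inf0 (X : Set ℝ≥0∞) : ℝ≥0∞ := if X = ∅ then 0 else sInf X

/-- Probability mass that a discrete distribution assigns to a set of states. -/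
def pmfMass {S : Type} (D : PMF S) (G : Set S) : ℝ≥0∞ := ∑' x : G, D x

/-- A nondeterministic and probabilistic labeled transition system (NPLTS):
a transition relation `→ ⊆ S × A × Distr(S)`, with `Distr(S)` the discrete
probability distributions over `S` (formalized as `PMF S`). -/
structure NPLTS (S A : Type) where
  trans : S → A → PMF S → Prop

namespace NPLTS

variable {S A : Type}

/-- The set of actions enabled at a state. -/
def enabled (L : NPLTS S A) (s : S) : Set A := {a | ∃ D, L.trans s a D}

/-- `s` has at least one outgoing transition. -/
def hasTrans (L : NPLTS S A) (s : S) : Prop := ∃ a D, L.trans s a D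

/-- A finite computation from `s`, recorded as the list of its steps
(action, target state): each step must come from some transition whose
distribution gives the target state positive probability. -/
def IsComp (L : NPLTS S A) : S → List (A × S) → Prop
  | _, [] => True
  | s, (a, s') :: c => (∃ D, L.trans s a D ∧ s' ∈ D.support) ∧ L.IsComp s' c

/-- The probability of a computation: the product of the step probabilities.
(In a fully probabilistic NPLTS, such as a resolution, the chosen transition
at each state is unique, so the supremum below selects its probability.) -/
def compProb (L : NPLTS S A) : S → List (A × S) → ℝ≥0∞
  | _, [] => 1
  | s, (a, s') :: c => (⨆ (D : PMF S) (_ : L.trans s a D), D s') * L.compProb s' c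

/-- The probability of a set of computations from `s`. -/
def probSet (L : NPLTS S A) (s : S) (C : Set (List (A × S))) : ℝ≥0∞ :=
  ∑' c : C, L.compProb s (c : List (A × S))

/-- Each state has finitely many outgoing transitions. -/
def FinitelyBranching (L : NPLTS S A) : Prop :=
  ∀ s : S, {p : A × PMF S | L.trans s p.1 p.2}.Finite

/-- Every transition concentrates all the probability mass in a single state. -/
def FullyNondeterministic (L : NPLTS S A) : Prop :=
  ∀ s a D, L.trans s a D → ∃ s', D = PMF.pure s'

/-- Every state has at most one outgoing transition. -/
def FullyProbabilistic (L : NPLTS S A) : Prop :=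
  ∀ (s : S) a₁ D₁ a₂ D₂, L.trans s a₁ D₁ → L.trans s a₂ D₂ → a₁ = a₂ ∧ D₁ = D₂

/-- Fully synchronous parallel composition of two NPLTSs over the same actions. -/
def par {S₁ S₂ : Type} (L₁ : NPLTS S₁ A) (L₂ : NPLTS S₂ A) : NPLTS (S₁ × S₂) A where
  trans p a D := ∃ D₁ D₂, L₁.trans p.1 a D₁ ∧ L₂.trans p.2 a D₂ ∧
    ∀ q : S₁ × S₂, D q = D₁ q.1 * D₂ q.2

end NPLTS

/-- The final state of a computation starting at `s`. -/
def lastState {S A : Type} : S → List (A × S) → S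
  | s, [] => s
  | _, (_, s') :: c => lastState s' c

/-- The trace (sequence of actions) of a computation. -/
def traceOf {S A : Type} (c : List (A × S)) : List A := c.map Prod.fst

/-- Stepwise compatibility of a computation with a decorated trace: the actions
match and after each step the (corresponding) reached state satisfies `P`
with respect to the decoration. -/
def decoComp {S A Z : Type} (P : S → Set A → Prop) (corr : Z → S) :
    List (A × Z) → List (A × Set A) → Prop
  | [], [] => True
  | (a, z) :: c, (b, X) :: φ => a = b ∧ P (corr z) X ∧ decoComp P corr c φ
  | _, _ => False

/-- A resolution of `s` obtained via a deterministic scheduler: a fully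
probabilistic NPLTS together with a correspondence function to the states of
the original NPLTS. -/
structure Resolution {S A : Type} (L : NPLTS S A) (s : S) where
  State : Type
  countable : Countable State
  lts : NPLTS State A
  corr : State → S
  init : State
  corr_init : corr init = s
  mimic : ∀ z a D, lts.trans z a D →
    ∃ D', L.trans (corr z) a D' ∧ ∀ z', D z' = D' (corr z')
  det : ∀ z a₁ a₂ D₁ D₂, lts.trans z a₁ D₁ → lts.trans z a₂ D₂ → a₁ = a₂ ∧ D₁ = D₂

namespace Resolution

variable {S A : Type} {L : NPLTS S A} {s : S}

/-- Probability of a set of computations of the resolution from its initial state. -/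
def prob (R : Resolution L s) (C : Set (List (A × R.State))) : ℝ≥0∞ :=
  R.lts.probSet R.init C

/-- `CC(z_s, α)`: the α-compatible computations from the initial state. -/
def cc (R : Resolution L s) (α : List A) : Set (List (A × R.State)) :=
  {c | R.lts.IsComp R.init c ∧ traceOf c = α}

/-- `CCC(z_s, α)`: the completed α-compatible computations (the corresponding
final state has no outgoing transitions in the original NPLTS). -/
def ccc (R : Resolution L s) (α : List A) : Set (List (A × R.State)) :=
  {c | c ∈ R.cc α ∧ ¬ L.hasTrans (R.corr (lastState R.init c))}

/-- `FCC(z_s, (α, F))`: α-compatible computations whose corresponding final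
state enables no action of the failure set `F`. -/
def fcc (R : Resolution L s) (α : List A) (F : Set A) : Set (List (A × R.State)) :=
  {c | c ∈ R.cc α ∧ ∀ f ∈ F, f ∉ L.enabled (R.corr (lastState R.init c))}

/-- `RCC(z_s, (α, Rd))`: α-compatible computations whose corresponding final
state enables exactly the ready set `Rd`. -/
def rcc (R : Resolution L s) (α : List A) (Rd : Set A) : Set (List (A × R.State)) :=
  {c | c ∈ R.cc α ∧ L.enabled (R.corr (lastState R.init c)) = Rd}

/-- `FTCC(z_s, φ)`: computations compatible with the failure trace `φ`. -/
def ftcc (R : Resolution L s) (φ : List (A × Set A)) : Set (List (A × R.State)) :=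
  {c | R.lts.IsComp R.init c ∧
    decoComp (fun t F => ∀ f ∈ F, f ∉ L.enabled t) R.corr c φ}

/-- `RTCC(z_s, ρ)`: computations compatible with the ready trace `ρ`. -/
def rtcc (R : Resolution L s) (ρ : List (A × Set A)) : Set (List (A × R.State)) :=
  {c | R.lts.IsComp R.init c ∧ decoComp (fun t X => L.enabled t = X) R.corr c ρ}

/-- `R ∈ Res_α(s)`: the resolution has no (maximal) computation corresponding
to a proper prefix of an α-compatible computation of the original NPLTS. -/
def InResAlpha (R : Resolution L s) (α : List A) : Prop :=
  ¬ ∃ c : List (A × R.State), R.lts.IsComp R.init c ∧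
      ¬ R.lts.hasTrans (lastState R.init c) ∧
      ∃ c' : List (A × S), L.IsComp s c' ∧ traceOf c' = α ∧
        (c.map fun p => (p.1, R.corr p.2)) <+: c' ∧ c.length < c'.length

/-- A state of the resolution reachable from its initial state. -/
def reachable (R : Resolution L s) (z : R.State) : Prop :=
  ∃ c, R.lts.IsComp R.init c ∧ lastState R.init c = z

/-- A maximal resolution: it cannot be further extended, i.e. every reachable
state whose corresponding state has an outgoing transition has one too. -/
def Maximal (R : Resolution L s) : Prop :=
  ∀ z, R.reachable z → L.hasTrans (R.corr z) → R.lts.hasTrans z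

/-- `SC(z_{s,o})`: successful computations of a resolution of a configuration
of an interaction system (the test component of the final configuration is
the success state `ω`). -/
def sc {S O : Type} {I : NPLTS (S × O) A} {cfg : S × O}
    (R : Resolution I cfg) (ω : O) : Set (List (A × R.State)) :=
  {c | R.lts.IsComp R.init c ∧ (R.corr (lastState R.init c)).2 = ω}

/-- `SCC(z_{s,o}, α)`: successful α-compatible computations. -/
def scc {S O : Type} {I : NPLTS (S × O) A} {cfg : S × O}
    (R : Resolution I cfg) (ω : O) (α : List A) : Set (List (A × R.State)) :=
  {c | (R.lts.IsComp R.init c ∧ (R.corr (lastState R.init c)).2 = ω) ∧ traceOf c = α}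

end Resolution

section Equivalences

variable {S A : Type} (L : NPLTS S A)

/-! ### Trace-based equivalences -/

/-- Probabilistic trace-distribution equivalence `≈_{PTr,dis}`. -/
def PTrDis (s₁ s₂ : S) : Prop :=
  (∀ R₁ : Resolution L s₁, ∃ R₂ : Resolution L s₂,
    ∀ α : List A, R₁.prob (R₁.cc α) = R₂.prob (R₂.cc α)) ∧
  (∀ R₂ : Resolution L s₂, ∃ R₁ : Resolution L s₁,
    ∀ α : List A, R₂.prob (R₂.cc α) = R₁.prob (R₁.cc α))

/-- Probabilistic trace equivalence `≈_{PTr}`. -/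
def PTr (s₁ s₂ : S) : Prop :=
  ∀ α : List A,
    (∀ R₁ : Resolution L s₁, ∃ R₂ : Resolution L s₂,
      R₁.prob (R₁.cc α) = R₂.prob (R₂.cc α)) ∧
    (∀ R₂ : Resolution L s₂, ∃ R₁ : Resolution L s₁,
      R₂.prob (R₂.cc α) = R₁.prob (R₁.cc α))

/-- The set of values `prob(CC(z_s, α))` over the resolutions in `Res_α(s)`. -/
def ccVals (s : S) (α : List A) : Set ℝ≥0∞ :=
  {p | ∃ R : Resolution L s, R.InResAlpha α ∧ p = R.prob (R.cc α)}

/-- Probabilistic ⊔⊓-trace equivalence `≈_{PTr,⊔⊓}`. -/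
def PTrSupInf (s₁ s₂ : S) : Prop :=
  ∀ α : List A,
    sSup (ccVals L s₁ α) = sSup (ccVals L s₂ α) ∧
    inf0 (ccVals L s₁ α) = inf0 (ccVals L s₂ α)

/-- Probabilistic completed-trace-distribution equivalence `≈_{PCTr,dis}`. -/
def PCTrDis (s₁ s₂ : S) : Prop :=
  (∀ R₁ : Resolution L s₁, ∃ R₂ R₂' : Resolution L s₂, ∀ α : List A,
    R₁.prob (R₁.cc α) = R₂.prob (R₂.cc α) ∧
    R₁.prob (R₁.ccc α) = R₂'.prob (R₂'.ccc α)) ∧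
  (∀ R₂ : Resolution L s₂, ∃ R₁ R₁' : Resolution L s₁, ∀ α : List A,
    R₂.prob (R₂.cc α) = R₁.prob (R₁.cc α) ∧
    R₂.prob (R₂.ccc α) = R₁'.prob (R₁'.ccc α))

/-- Probabilistic completed-trace equivalence `≈_{PCTr}`. -/
def PCTr (s₁ s₂ : S) : Prop :=
  ∀ α : List A,
    (∀ R₁ : Resolution L s₁, ∃ R₂ R₂' : Resolution L s₂,
      R₁.prob (R₁.cc α) = R₂.prob (R₂.cc α) ∧
      R₁.prob (R₁.ccc α) = R₂'.prob (R₂'.ccc α)) ∧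
    (∀ R₂ : Resolution L s₂, ∃ R₁ R₁' : Resolution L s₁,
      R₂.prob (R₂.cc α) = R₁.prob (R₁.cc α) ∧
      R₂.prob (R₂.ccc α) = R₁'.prob (R₁'.ccc α))

/-- The set of values `prob(CCC(z_s, α))` over the resolutions in `Res_α(s)`. -/
def cccVals (s : S) (α : List A) : Set ℝ≥0∞ :=
  {p | ∃ R : Resolution L s, R.InResAlpha α ∧ p = R.prob (R.ccc α)}

/-- Probabilistic ⊔⊓-completed-trace equivalence `≈_{PCTr,⊔⊓}`. -/
def PCTrSupInf (s₁ s₂ : S) : Prop :=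
  ∀ α : List A,
    (sSup (ccVals L s₁ α) = sSup (ccVals L s₂ α) ∧
     inf0 (ccVals L s₁ α) = inf0 (ccVals L s₂ α)) ∧
    (sSup (cccVals L s₁ α) = sSup (cccVals L s₂ α) ∧
     inf0 (cccVals L s₁ α) = inf0 (cccVals L s₂ α))

/-- Probabilistic failure-distribution equivalence `≈_{PF,dis}`. -/
def PFDis (s₁ s₂ : S) : Prop :=
  (∀ R₁ : Resolution L s₁, ∃ R₂ : Resolution L s₂, ∀ (α : List A) (F : Set A),
    R₁.prob (R₁.fcc α F) = R₂.prob (R₂.fcc α F)) ∧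
  (∀ R₂ : Resolution L s₂, ∃ R₁ : Resolution L s₁, ∀ (α : List A) (F : Set A),
    R₂.prob (R₂.fcc α F) = R₁.prob (R₁.fcc α F))

/-- Probabilistic failure equivalence `≈_{PF}`. -/
def PF (s₁ s₂ : S) : Prop :=
  ∀ (α : List A) (F : Set A),
    (∀ R₁ : Resolution L s₁, ∃ R₂ : Resolution L s₂,
      R₁.prob (R₁.fcc α F) = R₂.prob (R₂.fcc α F)) ∧
    (∀ R₂ : Resolution L s₂, ∃ R₁ : Resolution L s₁,
      R₂.prob (R₂.fcc α F) = R₁.prob (R₁.fcc α F))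

/-- The set of values `prob(FCC(z_s, (α, F)))` over the resolutions in `Res_α(s)`. -/
def fccVals (s : S) (α : List A) (F : Set A) : Set ℝ≥0∞ :=
  {p | ∃ R : Resolution L s, R.InResAlpha α ∧ p = R.prob (R.fcc α F)}

/-- Probabilistic ⊔⊓-failure equivalence `≈_{PF,⊔⊓}`. -/
def PFSupInf (s₁ s₂ : S) : Prop :=
  ∀ (α : List A) (F : Set A),
    sSup (fccVals L s₁ α F) = sSup (fccVals L s₂ α F) ∧
    inf0 (fccVals L s₁ α F) = inf0 (fccVals L s₂ α F)

/-- Probabilistic failure-trace-distribution equivalence `≈_{PFTr,dis}`. -/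
def PFTrDis (s₁ s₂ : S) : Prop :=
  (∀ R₁ : Resolution L s₁, ∃ R₂ : Resolution L s₂, ∀ φ : List (A × Set A),
    R₁.prob (R₁.ftcc φ) = R₂.prob (R₂.ftcc φ)) ∧
  (∀ R₂ : Resolution L s₂, ∃ R₁ : Resolution L s₁, ∀ φ : List (A × Set A),
    R₂.prob (R₂.ftcc φ) = R₁.prob (R₁.ftcc φ))

/-- Probabilistic failure-trace equivalence `≈_{PFTr}`. -/
def PFTr (s₁ s₂ : S) : Prop :=
  ∀ φ : List (A × Set A),
    (∀ R₁ : Resolution L s₁, ∃ R₂ : Resolution L s₂,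
      R₁.prob (R₁.ftcc φ) = R₂.prob (R₂.ftcc φ)) ∧
    (∀ R₂ : Resolution L s₂, ∃ R₁ : Resolution L s₁,
      R₂.prob (R₂.ftcc φ) = R₁.prob (R₁.ftcc φ))

/-- The set of values `prob(FTCC(z_s, φ))` over the resolutions in
`Res_{a₁…aₙ}(s)`, where `a₁…aₙ` is the trace underlying `φ`. -/
def ftccVals (s : S) (φ : List (A × Set A)) : Set ℝ≥0∞ :=
  {p | ∃ R : Resolution L s, R.InResAlpha (φ.map Prod.fst) ∧ p = R.prob (R.ftcc φ)}

/-- Probabilistic ⊔⊓-failure-trace equivalence `≈_{PFTr,⊔⊓}`. -/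
def PFTrSupInf (s₁ s₂ : S) : Prop :=
  ∀ φ : List (A × Set A),
    sSup (ftccVals L s₁ φ) = sSup (ftccVals L s₂ φ) ∧
    inf0 (ftccVals L s₁ φ) = inf0 (ftccVals L s₂ φ)

/-- Probabilistic readiness-distribution equivalence `≈_{PR,dis}`. -/
def PRDis (s₁ s₂ : S) : Prop :=
  (∀ R₁ : Resolution L s₁, ∃ R₂ : Resolution L s₂, ∀ (α : List A) (Rd : Set A),
    R₁.prob (R₁.rcc α Rd) = R₂.prob (R₂.rcc α Rd)) ∧
  (∀ R₂ : Resolution L s₂, ∃ R₁ : Resolution L s₁, ∀ (α : List A) (Rd : Set A),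
    R₂.prob (R₂.rcc α Rd) = R₁.prob (R₁.rcc α Rd))

/-- Probabilistic readiness equivalence `≈_{PR}`. -/
def PR (s₁ s₂ : S) : Prop :=
  ∀ (α : List A) (Rd : Set A),
    (∀ R₁ : Resolution L s₁, ∃ R₂ : Resolution L s₂,
      R₁.prob (R₁.rcc α Rd) = R₂.prob (R₂.rcc α Rd)) ∧
    (∀ R₂ : Resolution L s₂, ∃ R₁ : Resolution L s₁,
      R₂.prob (R₂.rcc α Rd) = R₁.prob (R₁.rcc α Rd))

/-- The set of values `prob(RCC(z_s, (α, Rd)))` over the resolutions in `Res_α(s)`. -/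
def rccVals (s : S) (α : List A) (Rd : Set A) : Set ℝ≥0∞ :=
  {p | ∃ R : Resolution L s, R.InResAlpha α ∧ p = R.prob (R.rcc α Rd)}

/-- Probabilistic ⊔⊓-readiness equivalence `≈_{PR,⊔⊓}`. -/
def PRSupInf (s₁ s₂ : S) : Prop :=
  ∀ (α : List A) (Rd : Set A),
    sSup (rccVals L s₁ α Rd) = sSup (rccVals L s₂ α Rd) ∧
    inf0 (rccVals L s₁ α Rd) = inf0 (rccVals L s₂ α Rd)

/-- Probabilistic ready-trace-distribution equivalence `≈_{PRTr,dis}`. -/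
def PRTrDis (s₁ s₂ : S) : Prop :=
  (∀ R₁ : Resolution L s₁, ∃ R₂ : Resolution L s₂, ∀ ρ : List (A × Set A),
    R₁.prob (R₁.rtcc ρ) = R₂.prob (R₂.rtcc ρ)) ∧
  (∀ R₂ : Resolution L s₂, ∃ R₁ : Resolution L s₁, ∀ ρ : List (A × Set A),
    R₂.prob (R₂.rtcc ρ) = R₁.prob (R₁.rtcc ρ))

/-- Probabilistic ready-trace equivalence `≈_{PRTr}`. -/
def PRTr (s₁ s₂ : S) : Prop :=
  ∀ ρ : List (A × Set A),
    (∀ R₁ : Resolution L s₁, ∃ R₂ : Resolution L s₂,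
      R₁.prob (R₁.rtcc ρ) = R₂.prob (R₂.rtcc ρ)) ∧
    (∀ R₂ : Resolution L s₂, ∃ R₁ : Resolution L s₁,
      R₂.prob (R₂.rtcc ρ) = R₁.prob (R₁.rtcc ρ))

/-- The set of values `prob(RTCC(z_s, ρ))` over the resolutions in
`Res_{a₁…aₙ}(s)`, where `a₁…aₙ` is the trace underlying `ρ`. -/
def rtccVals (s : S) (ρ : List (A × Set A)) : Set ℝ≥0∞ :=
  {p | ∃ R : Resolution L s, R.InResAlpha (ρ.map Prod.fst) ∧ p = R.prob (R.rtcc ρ)}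

/-- Probabilistic ⊔⊓-ready-trace equivalence `≈_{PRTr,⊔⊓}`. -/
def PRTrSupInf (s₁ s₂ : S) : Prop :=
  ∀ ρ : List (A × Set A),
    sSup (rtccVals L s₁ ρ) = sSup (rtccVals L s₂ ρ) ∧
    inf0 (rtccVals L s₁ ρ) = inf0 (rtccVals L s₂ ρ)

end Equivalences

/-! ### Tests and testing equivalences -/

/-- A nondeterministic and probabilistic test (NPT): a finite NPLTS (finitely
many states, finitely many outgoing transitions per state, acyclic) with a
distinguished success state `succ` having no outgoing transitions. -/
structure NPT (A : Type) where
  O : Type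
  lts : NPLTS O A
  succ : O
  fin : Finite O
  finTrans : ∀ o : O, {p : A × PMF O | lts.trans o p.1 p.2}.Finite
  acyclic : ∀ (o : O) (c : List (A × O)), lts.IsComp o c → c ≠ [] → lastState o c ≠ o
  succ_stop : ∀ a D, ¬ lts.trans succ a D

section Testing

variable {S A : Type} (L : NPLTS S A)

/-- The set of success probabilities over the maximal resolutions of the
configuration `(s, o)` of the interaction system of `L` and `T`. -/
def scVals (T : NPT A) (s : S) (o : T.O) : Set ℝ≥0∞ :=
  {p | ∃ R : Resolution (L.par T.lts) (s, o), R.Maximal ∧ p = R.prob (R.sc T.succ)}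

/-- Probabilistic ⊔⊓-testing equivalence `≈_{PTe-⊔⊓}`. -/
def PTeSupInf (s₁ s₂ : S) : Prop :=
  ∀ (T : NPT A) (o : T.O),
    sSup (scVals L T s₁ o) = sSup (scVals L T s₂ o) ∧
    inf0 (scVals L T s₁ o) = inf0 (scVals L T s₂ o)

/-- Probabilistic ∀∃-testing equivalence `≈_{PTe-∀∃}`. -/
def PTeAE (s₁ s₂ : S) : Prop :=
  ∀ (T : NPT A) (o : T.O),
    (∀ R₁ : Resolution (L.par T.lts) (s₁, o), R₁.Maximal →
      ∃ R₂ : Resolution (L.par T.lts) (s₂, o), R₂.Maximal ∧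
        R₁.prob (R₁.sc T.succ) = R₂.prob (R₂.sc T.succ)) ∧
    (∀ R₂ : Resolution (L.par T.lts) (s₂, o), R₂.Maximal →
      ∃ R₁ : Resolution (L.par T.lts) (s₁, o), R₁.Maximal ∧
        R₂.prob (R₂.sc T.succ) = R₁.prob (R₁.sc T.succ))

/-- Probabilistic trace-by-trace-distribution testing equivalence `≈_{PTe-tbt,dis}`. -/
def PTeTbtDis (s₁ s₂ : S) : Prop :=
  ∀ (T : NPT A) (o : T.O),
    (∀ R₁ : Resolution (L.par T.lts) (s₁, o), R₁.Maximal →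
      ∃ R₂ : Resolution (L.par T.lts) (s₂, o), R₂.Maximal ∧ ∀ α : List A,
        ((R₁.ccc α).Nonempty → (R₂.ccc α).Nonempty) ∧
        R₁.prob (R₁.scc T.succ α) = R₂.prob (R₂.scc T.succ α)) ∧
    (∀ R₂ : Resolution (L.par T.lts) (s₂, o), R₂.Maximal →
      ∃ R₁ : Resolution (L.par T.lts) (s₁, o), R₁.Maximal ∧ ∀ α : List A,
        ((R₂.ccc α).Nonempty → (R₁.ccc α).Nonempty) ∧
        R₂.prob (R₂.scc T.succ α) = R₁.prob (R₁.scc T.succ α))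

/-- Probabilistic trace-by-trace testing equivalence `≈_{PTe-tbt}`. -/
def PTeTbt (s₁ s₂ : S) : Prop :=
  ∀ (T : NPT A) (o : T.O) (α : List A),
    (∀ R₁ : Resolution (L.par T.lts) (s₁, o), R₁.Maximal → (R₁.ccc α).Nonempty →
      ∃ R₂ : Resolution (L.par T.lts) (s₂, o), R₂.Maximal ∧ (R₂.ccc α).Nonempty ∧
        R₁.prob (R₁.scc T.succ α) = R₂.prob (R₂.scc T.succ α)) ∧
    (∀ R₂ : Resolution (L.par T.lts) (s₂, o), R₂.Maximal → (R₂.ccc α).Nonempty →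
      ∃ R₁ : Resolution (L.par T.lts) (s₁, o), R₁.Maximal ∧ (R₁.ccc α).Nonempty ∧
        R₂.prob (R₂.scc T.succ α) = R₁.prob (R₁.scc T.succ α))

/-- The set of values `prob(SCC(z_{s,o}, α))` over `Res_{max,C,α}(s, o)`. -/
def sccVals (T : NPT A) (s : S) (o : T.O) (α : List A) : Set ℝ≥0∞ :=
  {p | ∃ R : Resolution (L.par T.lts) (s, o), R.Maximal ∧ (R.ccc α).Nonempty ∧
    p = R.prob (R.scc T.succ α)}

/-- Probabilistic ⊔⊓-trace-by-trace testing equivalence `≈_{PTe-tbt,⊔⊓}`. -/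
def PTeTbtSupInf (s₁ s₂ : S) : Prop :=
  ∀ (T : NPT A) (o : T.O) (α : List A),
    ((∃ R : Resolution (L.par T.lts) (s₁, o), R.Maximal ∧ (R.ccc α).Nonempty) ↔
     (∃ R : Resolution (L.par T.lts) (s₂, o), R.Maximal ∧ (R.ccc α).Nonempty)) ∧
    sSup (sccVals L T s₁ o α) = sSup (sccVals L T s₂ o α) ∧
    inf0 (sccVals L T s₁ o α) = inf0 (sccVals L T s₂ o α)

end Testing

/-! ### Bisimulation equivalences -/

section Bisimulations

variable {S A : Type} (L : NPLTS S A)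

/-- `G` is a union of equivalence classes of `B` (a "group of classes"). -/
def BClosed (B : S → S → Prop) (G : Set S) : Prop :=
  ∀ x y, B x y → x ∈ G → y ∈ G

/-- A probabilistic group-distribution bisimulation. -/
def IsPBDis (B : S → S → Prop) : Prop :=
  Equivalence B ∧ ∀ s₁ s₂, B s₁ s₂ → ∀ a D₁, L.trans s₁ a D₁ →
    ∃ D₂, L.trans s₂ a D₂ ∧ ∀ G : Set S, BClosed B G → pmfMass D₁ G = pmfMass D₂ G

/-- Probabilistic group-distribution bisimilarity `≈_{PB,dis}`. -/
def PBDis (s₁ s₂ : S) : Prop := ∃ B, IsPBDis L B ∧ B s₁ s₂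

/-- A probabilistic bisimulation (class groups considered one at a time). -/
def IsPB (B : S → S → Prop) : Prop :=
  Equivalence B ∧ ∀ s₁ s₂, B s₁ s₂ → ∀ G : Set S, BClosed B G →
    ∀ a D₁, L.trans s₁ a D₁ →
      ∃ D₂, L.trans s₂ a D₂ ∧ pmfMass D₁ G = pmfMass D₂ G

/-- Probabilistic bisimilarity `≈_{PB}`. -/
def PB (s₁ s₂ : S) : Prop := ∃ B, IsPB L B ∧ B s₁ s₂

/-- The set of values `D(∪G)` over the `a`-transitions of `s`. -/
def massVals (s : S) (a : A) (G : Set S) : Set ℝ≥0∞ :=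
  {p | ∃ D, L.trans s a D ∧ p = pmfMass D G}

/-- A probabilistic ⊔⊓-bisimulation. -/
def IsPBSupInf (B : S → S → Prop) : Prop :=
  Equivalence B ∧ ∀ s₁ s₂, B s₁ s₂ → ∀ G : Set S, BClosed B G → ∀ a : A,
    ((∃ D, L.trans s₁ a D) ↔ (∃ D, L.trans s₂ a D)) ∧
    sSup (massVals L s₁ a G) = sSup (massVals L s₂ a G) ∧
    inf0 (massVals L s₁ a G) = inf0 (massVals L s₂ a G)

/-- Probabilistic ⊔⊓-bisimilarity `≈_{PB,⊔⊓}`. -/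
def PBSupInf (s₁ s₂ : S) : Prop := ∃ B, IsPBSupInf L B ∧ B s₁ s₂

/-- Classical bisimilarity of the underlying LTS of a fully nondeterministic
NPLTS, where `s →a s'` means `s →a D` with `D(s') = 1`. -/
def BFnd (s₁ s₂ : S) : Prop :=
  ∃ B : S → S → Prop, Equivalence B ∧
    (∀ t₁ t₂, B t₁ t₂ → ∀ a t₁', (∃ D, L.trans t₁ a D ∧ D t₁' = 1) →
      ∃ t₂', (∃ D, L.trans t₂ a D ∧ D t₂' = 1) ∧ B t₁' t₂') ∧
    B s₁ s₂

end Bisimulations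

end

theorem stc_fcc_nil {S A : Type} {L : NPLTS S A} {s : S} (R : Resolution L s) (F : Set A) :
    R.prob (R.fcc [] F) = if (∀ f ∈ F, f ∉ L.enabled s) then 1 else 0 := by
  split_ifs with h
  · have : R.fcc [] F = {[]} := by
      ext c
      simp only [Resolution.fcc, Resolution.cc, traceOf, Set.mem_setOf_eq, Set.mem_singleton_iff,
        List.map_eq_nil_iff]
      constructor
      · rintro ⟨⟨_, h⟩, _⟩
        exact h
      · rintro rfl
        exact ⟨⟨trivial, rfl⟩, by simpa only [lastState, R.corr_init] using h⟩
    rw [this, Resolution.prob, NPLTS.probSet, tsum_singleton [] (R.lts.compProb R.init)]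
    rfl
  · have : R.fcc [] F = ∅ := by
      ext c
      simp only [Resolution.fcc, Resolution.cc, traceOf, Set.mem_setOf_eq,
        List.map_eq_nil_iff, Set.mem_empty_iff_false, iff_false]
      rintro ⟨⟨_, rfl⟩, h'⟩
      simp only [lastState, R.corr_init] at h'
      exact h h'
    rw [this, Resolution.prob, NPLTS.probSet]
    simp

/-- The one-step resolution that performs a single given transition of `s`. -/
def stcStep {S A : Type} [Countable S] {L : NPLTS S A} {s : S} {a : A} {D : PMF S}
    (h : L.trans s a D) : Resolution L s where
  State := S
  countable := inferInstance
  lts := ⟨fun z b E => z = s ∧ b = a ∧ E = D⟩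
  corr := id
  init := s
  corr_init := rfl
  mimic := by
    rintro z b E ⟨rfl, rfl, rfl⟩
    exact ⟨E, h, fun _ => rfl⟩
  det := by
    rintro z b₁ b₂ E₁ E₂ ⟨_, rfl, rfl⟩ ⟨_, rfl, rfl⟩
    exact ⟨rfl, rfl⟩

theorem stc_step_pos {S A : Type} [Countable S] {L : NPLTS S A} {s : S} {a : A} {D : PMF S}
    (h : L.trans s a D) : (stcStep h).prob ((stcStep h).ftcc [(a, ∅)]) ≠ 0 := by
  obtain ⟨x, hx⟩ := D.support_nonempty
  intro h0
  rw [Resolution.prob, NPLTS.probSet, ENNReal.tsum_eq_zero] at h0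
  have hm : ([(a, x)] : List (A × S)) ∈ (stcStep h).ftcc [(a, ∅)] := by
    refine ⟨⟨⟨D, ⟨rfl, rfl, rfl⟩, hx⟩, trivial⟩, rfl, ?_, trivial⟩
    intro f hf
    exact absurd hf (Set.notMem_empty f)
  have h1 := h0 ⟨_, hm⟩
  have h2 : (⨆ (E : PMF S) (_ : (stcStep h).lts.trans s a E), E x) * 1 = 0 := h1
  rw [mul_one] at h2
  have h3 : D x ≤ ⨆ (E : PMF S) (_ : (stcStep h).lts.trans s a E), E x :=
    le_iSup₂_of_le D ⟨rfl, rfl, rfl⟩ le_rfl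
  rw [h2] at h3
  exact (D.mem_support_iff x).1 hx (le_antisymm h3 bot_le)

theorem stc_enabled_of_pos {S A : Type} {L : NPLTS S A} {s : S} (R : Resolution L s) (a : A)
    (h : R.prob (R.ftcc [(a, ∅)]) ≠ 0) : a ∈ L.enabled s := by
  by_contra hn
  apply h
  rw [Resolution.prob, NPLTS.probSet, ENNReal.tsum_eq_zero]
  rintro ⟨c, hc, hd⟩
  exfalso
  match c, hc, hd with
  | [], _, hd => exact hd
  | (b, z) :: c, hc, hd =>
    obtain ⟨⟨D, hD, _⟩, _⟩ := hc
    obtain ⟨rfl, _⟩ := hd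
    obtain ⟨D', hD', _⟩ := R.mimic _ _ _ hD
    rw [R.corr_init] at hD'
    exact hn ⟨D', hD'⟩

theorem stc_enabled_sub {S A : Type} [Countable S] {L : NPLTS S A} {s t : S}
    (h : ∀ φ : List (A × Set A), ∀ R₁ : Resolution L s, ∃ R₂ : Resolution L t,
      R₁.prob (R₁.ftcc φ) = R₂.prob (R₂.ftcc φ)) : L.enabled s ⊆ L.enabled t := by
  rintro a ⟨D, hD⟩
  obtain ⟨R₂, h₂⟩ := h [(a, ∅)] (stcStep hD)
  exact stc_enabled_of_pos R₂ a (h₂ ▸ stc_step_pos hD)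

/-- The failure trace with empty failure sets except for the last one. -/
def stcDeco {A : Type} (F : Set A) : List A → List (A × Set A)
  | [] => []
  | [a] => [(a, F)]
  | a :: b :: α => (a, ∅) :: stcDeco F (b :: α)

theorem stc_deco {S A Z : Type} (L : NPLTS S A) (corr : Z → S) (F : Set A) (α : List A)
    (hα : α ≠ []) (z : Z) (c : List (A × Z)) :
    decoComp (fun t F => ∀ f ∈ F, f ∉ L.enabled t) corr c (stcDeco F α) ↔
      traceOf c = α ∧ ∀ f ∈ F, f ∉ L.enabled (corr (lastState z c)) := by
  induction α generalizing z c with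
  | nil => exact absurd rfl hα
  | cons a α ih =>
    cases α with
    | nil =>
      rcases c with _ | ⟨⟨b, y⟩, _ | ⟨⟨b', y'⟩, c⟩⟩ <;>
        simp [stcDeco, decoComp, traceOf, lastState]
    | cons a' α =>
      rcases c with _ | ⟨⟨b, y⟩, c⟩
      · simp [stcDeco, decoComp, traceOf]
      · have := ih (by simp) y c
        simp only [stcDeco, decoComp, this, lastState, traceOf, List.map_cons, List.cons.injEq,
          Set.mem_empty_iff_false, false_imp_iff, implies_true, true_and, and_assoc]

theorem stc_ftcc_deco {S A : Type} {L : NPLTS S A} {s : S} (R : Resolution L s) (F : Set A)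
    (α : List A) (hα : α ≠ []) : R.ftcc (stcDeco F α) = R.fcc α F := by
  ext c
  simp only [Resolution.ftcc, Resolution.fcc, Resolution.cc, Set.mem_setOf_eq,
    stc_deco L R.corr F α hα R.init c, and_assoc]

theorem stc_fcc_empty {S A : Type} {L : NPLTS S A} {s : S} (R : Resolution L s)
    (α : List A) : R.fcc α ∅ = R.cc α := by
  ext c
  simp [Resolution.fcc]

theorem stc_fcc_univ {S A : Type} {L : NPLTS S A} {s : S} (R : Resolution L s)
    (α : List A) : R.fcc α Set.univ = R.ccc α := by
  ext c
  simp [Resolution.fcc, Resolution.ccc, NPLTS.enabled, NPLTS.hasTrans]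

/-- `≈_{PFTr} ⊆ ≈_{PF} ⊆ ≈_{PCTr} ⊆ ≈_{PTr}`. -/
theorem single_trace_chain
    {S A : Type} [Countable S] [Countable A] (L : NPLTS S A) (s₁ s₂ : S) :
    (PFTr L s₁ s₂ → PF L s₁ s₂) ∧
    (PF L s₁ s₂ → PCTr L s₁ s₂) ∧
    (PCTr L s₁ s₂ → PTr L s₁ s₂) := by
  refine ⟨fun h α F => ?_, fun h α => ⟨fun R => ?_, fun R => ?_⟩,
    fun h α => ⟨fun R => ?_, fun R => ?_⟩⟩
  · by_cases hα : α = []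
    · subst hα
      have he : L.enabled s₁ = L.enabled s₂ :=
        Set.Subset.antisymm (stc_enabled_sub fun φ => (h φ).1) (stc_enabled_sub fun φ => (h φ).2)
      simp only [stc_fcc_nil, he]
      exact ⟨fun R => ⟨((h []).1 R).choose, trivial⟩, fun R => ⟨((h []).2 R).choose, trivial⟩⟩
    · have := h (stcDeco F α)
      simpa only [stc_ftcc_deco _ F α hα] using this
  · obtain ⟨R₂, h₂⟩ := (h α ∅).1 R
    obtain ⟨R₃, h₃⟩ := (h α Set.univ).1 R
    simp only [stc_fcc_empty, stc_fcc_univ] at h₂ h₃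
    exact ⟨R₂, R₃, h₂, h₃⟩
  · obtain ⟨R₂, h₂⟩ := (h α ∅).2 R
    obtain ⟨R₃, h₃⟩ := (h α Set.univ).2 R
    simp only [stc_fcc_empty, stc_fcc_univ] at h₂ h₃
    exact ⟨R₂, R₃, h₂, h₃⟩
  · obtain ⟨R₂, _, h₂, _⟩ := (h α).1 R
    exact ⟨R₂, h₂⟩
  · obtain ⟨R₂, _, h₂, _⟩ := (h α).2 R
    exact ⟨R₂, h₂⟩
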